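/- arXiv:1201.2922 — 2 statements merged into one kernel-verified Lean document; each statement's English description precedes it below -/
import Mathlib

section
/- Suppose F = x_0^{d_0} x_1^{d_1} ⋯ x_n^{d_n} ∈ ℂ[x_0,…,x_n] with 0 < d_0 ≤ d_1 ≤ ⋯ ≤ d_n, d = d_0 + ⋯ + d_n, and F = ℓ_1^d + ⋯ + ℓ_r^d is a Waring decomposition (r = R(F) = (d_1+1)⋯(d_n+1)). Let I ⊂ ℂ[α_0,…,α_n] be the homogeneous ideal of all polynomials vanishing on the points [ℓ_1],…,[ℓ_r] ∈ ℙ^n (i.e., vanishing on every scalar multiple of each ℓ_i, where ℓ_i is identified with its coefficient vector in ℂ^{n+1}). Then there exist homogeneous polynomials φ_1,…,φ_n ∈ ℂ[α_0,…,α_n] with deg φ_i = d_i − d_0 such that I is generated by the n elements α_1^{d_1+1} − φ_1 α_0^{d_0+1}, …, α_n^{d_n+1} − φ_n α_0^{d_0+1}; in particular I is a complete intersection of degrees d_1+1, …, d_n+1. -/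
open MvPolynomial

/-!
Expanding the powers in the decomposition gives a functional `L p = ∑ j, p (ℓ j)` on forms of degree
`∑ d i` which, up to a nonzero constant, reads off the coefficient of the monomial itself
(`sum_prod_pow_eq`). In the affine coordinates `v j i = ℓ j i / ℓ j 0` this becomes a weighted sum
that reads off the coefficient of `v ^ e`, with `e = (d 1, …, d n)`, on polynomials of degree at most
`∑ e i + d 0`.

Let `c` be the coefficients of a combination of the monomials `v ^ b` with `b ≤ e`, and `s` an exponent
of maximal degree occurring in it. Multiplying by `v ^ (e - s)` and applying the functional recovers
`c s` (`sum_mul_complement_eq`). Hence these `∏ (e i + 1)` monomials are linearly independent on the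
points, so `r ≥ ∏ (e i + 1)`. An explicit decomposition by roots of unity (`exists_decomposition`)
and minimality of `r` give equality. So the monomials form a basis of the functions on the points, and
every `ℓ j 0` is nonzero.

Write `v i ^ (e i + 1) = ∑ c b * v ^ b` on the points. If some `b` with `c b ≠ 0` had degree greater
than `e i - d 0`, then testing against `v ^ (e - s)`, with `s` of maximal degree, would give
`c s ≠ 0` on the right and `0` on the left, because the exponent of `v i` there exceeds `e i`.
Homogenising the right side therefore gives `φ i * X 0 ^ (d 0 + 1)` with `φ i` of degree `d i - d 0`,
and the elements `X i ^ (d i + 1) - φ i * X 0 ^ (d 0 + 1)` lie in `I`. Modulo these, every polynomial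
reduces to a `ℂ[X 0]`-combination of the monomials in the box (`normal_form`), and such a
combination vanishing on all multiples of the `ℓ j` is zero by linear independence.
-/

/-! ### Powers of linear forms and the evaluation functional -/

theorem coeff_linear_pow {m : ℕ} (l : Fin m → ℂ) (N : ℕ) (a : Fin m → ℕ) :
    coeff (Finsupp.equivFunOnFinite.symm a) ((∑ i, C (l i) * X i : MvPolynomial (Fin m) ℂ) ^ N)
      = if ∑ i, a i = N then (Nat.multinomial Finset.univ a : ℂ) * ∏ i, l i ^ a i else 0 := by
  have key : ∀ k : Fin m → ℕ, (Nat.multinomial Finset.univ k : MvPolynomial (Fin m) ℂ)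
      * ∏ i, (C (l i) * X i) ^ k i = monomial (Finsupp.equivFunOnFinite.symm k)
        ((Nat.multinomial Finset.univ k : ℂ) * ∏ i, l i ^ k i) := by
    intro k
    rw [monomial_eq, Finsupp.prod_fintype _ _ (by simp)]
    simp [mul_pow, Finset.prod_mul_distrib, mul_assoc]
  rw [Finset.sum_pow_eq_sum_piAntidiag, Finset.sum_congr rfl fun k _ => key k, coeff_sum]
  simp only [coeff_monomial, EmbeddingLike.apply_eq_iff_eq]
  simp [Finset.sum_ite_eq']

theorem coeff_prod_X_pow {m : ℕ} (d a : Fin m → ℕ) :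
    coeff (Finsupp.equivFunOnFinite.symm a) (∏ i, X i ^ d i : MvPolynomial (Fin m) ℂ)
      = if a = d then 1 else 0 := by
  have : (∏ i, X i ^ d i : MvPolynomial (Fin m) ℂ)
      = monomial (Finsupp.equivFunOnFinite.symm d) 1 := by
    rw [monomial_eq, Finsupp.prod_fintype _ _ (by simp)]
    simp
  rw [this, coeff_monomial]
  simp only [EmbeddingLike.apply_eq_iff_eq, eq_comm]

/-- The part of apolarity that is needed: on forms of degree `∑ d i`, summing the values at the
points `ℓ j` is a nonzero multiple of extracting the coefficient of the monomial with exponent `d`. -/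
theorem sum_prod_pow_eq {m r : ℕ} (d : Fin m → ℕ) (ℓ : Fin r → Fin m → ℂ)
    (hdec : (∏ i, X i ^ d i : MvPolynomial (Fin m) ℂ)
        = ∑ j, (∑ i, C (ℓ j i) * X i) ^ (∑ i, d i)) :
    ∃ κ : ℂ, κ ≠ 0 ∧ ∀ a : Fin m → ℕ, ∑ i, a i = ∑ i, d i →
      ∑ j, ∏ i, ℓ j i ^ a i = if a = d then κ else 0 := by
  have hne : ∀ a : Fin m → ℕ, (Nat.multinomial Finset.univ a : ℂ) ≠ 0 := fun a =>
    Nat.cast_ne_zero.mpr (Nat.multinomial_pos _ _).ne'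
  refine ⟨(Nat.multinomial Finset.univ d : ℂ)⁻¹, inv_ne_zero (hne d), fun a ha => ?_⟩
  have h := congrArg (coeff (Finsupp.equivFunOnFinite.symm a)) hdec
  rw [coeff_prod_X_pow, coeff_sum] at h
  simp only [coeff_linear_pow, ha, if_true, ← Finset.mul_sum] at h
  split_ifs at h ⊢ with had
  · subst had
    exact (eq_inv_of_mul_eq_one_right h.symm)
  · simpa [hne a] using h.symm

/-! ### An explicit decomposition -/

theorem sum_root_pow (N : ℕ) [NeZero N] (ω : ℂ) (hω : IsPrimitiveRoot ω N) (k : ℕ) :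
    ∑ t : Fin N, (ω ^ (t : ℕ)) ^ k = if N ∣ k then (N : ℂ) else 0 := by
  have h1 : ∀ t : ℕ, (ω ^ t) ^ k = (ω ^ k) ^ t := fun t => by rw [← pow_mul, ← pow_mul, mul_comm]
  simp only [h1]
  rw [Fin.sum_univ_eq_sum_range (fun t => (ω ^ k) ^ t)]
  split_ifs with h
  · simp [(hω.pow_eq_one_iff_dvd k).2 h]
  · have h2 : ω ^ k ≠ 1 := fun e => h ((hω.pow_eq_one_iff_dvd k).1 e)
    rw [geom_sum_eq h2, ← pow_mul, mul_comm k, pow_mul, hω.pow_eq_one]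
    simp

/-- If `a i + 1` is divisible by `d i + 1` for `i ≥ 1`, then either `a i = d i` or
`a i ≥ 2 * d i + 1`, and the latter exceeds the total degree because `d 0 ≤ d i`. -/
theorem exponent_eq_of_dvd {n : ℕ} (d a : Fin (n + 1) → ℕ) (hmono : Monotone d)
    (hsum : ∑ i, a i = ∑ i, d i) (hdvd : ∀ i : Fin n, d i.succ + 1 ∣ a i.succ + 1) : a = d := by
  have hge : ∀ i : Fin n, d i.succ ≤ a i.succ := fun i => by
    have := Nat.le_of_dvd (Nat.succ_pos _) (hdvd i); omega
  rw [Fin.sum_univ_succ, Fin.sum_univ_succ] at hsum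
  have hsub : ∑ i : Fin n, (a i.succ - d i.succ) = ∑ i : Fin n, a i.succ - ∑ i : Fin n, d i.succ :=
    Finset.sum_tsub_distrib _ fun i _ => hge i
  have hle : ∑ i : Fin n, d i.succ ≤ ∑ i : Fin n, a i.succ := Finset.sum_le_sum fun i _ => hge i
  have heq : ∀ i : Fin n, a i.succ = d i.succ := by
    intro i
    by_contra hne
    obtain ⟨c, hc⟩ := hdvd i
    have h1 : a i.succ - d i.succ ≤ ∑ i : Fin n, (a i.succ - d i.succ) :=
      Finset.single_le_sum (f := fun i : Fin n => a i.succ - d i.succ)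
        (fun _ _ => Nat.zero_le _) (Finset.mem_univ i)
    have h0 : d 0 ≤ d i.succ := hmono (Fin.zero_le _)
    have hc2 : 2 ≤ c := by
      rcases c with _ | _ | c
      · omega
      · omega
      · omega
    have h2 : (d i.succ + 1) * 2 ≤ (d i.succ + 1) * c := Nat.mul_le_mul_left _ hc2
    have := hge i
    omega
  have h0 : a 0 = d 0 := by
    have : ∑ i : Fin n, a i.succ = ∑ i : Fin n, d i.succ := Finset.sum_congr rfl fun i _ => heq i
    omega
  funext i
  refine Fin.cases h0 heq i

/-- The upper bound `∏ i ≥ 1, (d i + 1)` for the Waring rank. The linear forms are multiples of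
`X 0 + ∑ ζ i * X i` with `ζ i` running over the roots of unity of order `d i + 1`; summing their powers
with weights `∏ ζ i` leaves only the exponents of `exponent_eq_of_dvd`. -/
theorem exists_decomposition {n : ℕ} (d : Fin (n + 1) → ℕ) (hmono : Monotone d) (hpos : 0 < d 0) :
    ∃ m : Fin (Fintype.card ((i : Fin n) → Fin (d i.succ + 1))) → (Fin (n + 1) → ℂ),
      (∏ i, X i ^ d i : MvPolynomial (Fin (n + 1)) ℂ)
        = ∑ j, (∑ i, C (m j i) * X i) ^ (∑ i, d i) := by
  classical
  set T := (i : Fin n) → Fin (d i.succ + 1)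
  have hd : 0 < ∑ i, d i := by rw [Fin.sum_univ_succ]; omega
  choose ω hω using fun i : Fin n =>
    (⟨_, Complex.isPrimitiveRoot_exp (d i.succ + 1) (Nat.succ_ne_zero _)⟩ :
      ∃ ω : ℂ, IsPrimitiveRoot ω (d i.succ + 1))
  set A : ℂ := (Nat.multinomial Finset.univ d : ℂ) with hA
  have hA0 : A ≠ 0 := Nat.cast_ne_zero.mpr (Nat.multinomial_pos _ _).ne'
  set D : ℂ := ∏ i : Fin n, ((d i.succ + 1 : ℕ) : ℂ) with hD
  have hD0 : D ≠ 0 := Finset.prod_ne_zero_iff.mpr fun i _ =>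
    Nat.cast_ne_zero.mpr (Nat.succ_ne_zero _)
  -- A `(∑ d i)`-th root absorbs the scalar in front of each power.
  choose z hz using fun t : T =>
    IsAlgClosed.exists_pow_nat_eq (A⁻¹ * D⁻¹ * ∏ i, ω i ^ (t i : ℕ)) hd
  let u : T → Fin (n + 1) → ℂ := fun t => Fin.cons (z t) fun i => z t * ω i ^ (t i : ℕ)
  refine ⟨fun j => u ((Fintype.equivFin T).symm j), ?_⟩
  rw [Fintype.sum_equiv (Fintype.equivFin T).symm _
    (fun t : T => (∑ i, C (u t i) * X i) ^ (∑ i, d i)) (fun _ => rfl)]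
  ext s
  obtain ⟨a, rfl⟩ := Finsupp.equivFunOnFinite.symm.surjective s
  rw [coeff_prod_X_pow, coeff_sum]
  simp only [coeff_linear_pow]
  by_cases ha : ∑ i, a i = ∑ i, d i
  · have hterm : ∀ t : T, ∏ i, u t i ^ a i
        = A⁻¹ * D⁻¹ * ∏ i, (ω i ^ (t i : ℕ)) ^ (a i.succ + 1) := by
      intro t
      have : ∏ i, u t i ^ a i = z t ^ (∑ i, a i) * ∏ i, (ω i ^ (t i : ℕ)) ^ (a i.succ) := by
        rw [Fin.prod_univ_succ, Fin.sum_univ_succ]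
        simp only [u, Fin.cons_zero, Fin.cons_succ, mul_pow, Finset.prod_mul_distrib, pow_add,
          Finset.prod_pow_eq_pow_sum]
        ring
      rw [this, ha, hz]
      simp only [pow_succ _ (a _), Finset.prod_mul_distrib]
      ring
    have hsum : ∑ t : T, ∏ i, (ω i ^ (t i : ℕ)) ^ (a i.succ + 1)
        = ∏ i : Fin n, if d i.succ + 1 ∣ a i.succ + 1 then ((d i.succ + 1 : ℕ) : ℂ) else 0 := by
      rw [← Finset.prod_congr rfl fun i _ => sum_root_pow (d i.succ + 1) (ω i) (hω i) (a i.succ + 1),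
        Finset.prod_univ_sum, Fintype.piFinset_univ]
    simp only [ha, if_true, hterm, ← Finset.mul_sum, hsum]
    split_ifs with had
    · subst had
      simp only [dvd_refl, if_true, ← hD, ← hA]
      field_simp
    · have : ∃ i : Fin n, ¬ (d i.succ + 1 ∣ a i.succ + 1) := by
        by_contra! hcon
        exact had (exponent_eq_of_dvd d a hmono ha hcon)
      obtain ⟨i, hi⟩ := this
      rw [Finset.prod_eq_zero (Finset.mem_univ i) (if_neg hi)]
      simp
  · have : a ≠ d := by rintro rfl; exact ha rfl
    simp [ha, this]

/-! ### The monomials in the box as functions on the points -/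

/-- Dehomogenised form of `sum_prod_pow_eq`, in the coordinates `ℓ j i / ℓ j 0`. Points with
`ℓ j 0 = 0`, where the quotients are junk, have weight `0` and contribute nothing as long as the
degree of the affine monomial is strictly smaller than `∑ d i`. -/
theorem sum_weight_mul_prod_pow_eq {n r : ℕ} (d : Fin (n + 1) → ℕ) (ℓ : Fin r → Fin (n + 1) → ℂ) (κ : ℂ)
    (hκ : ∀ a : Fin (n + 1) → ℕ, ∑ i, a i = ∑ i, d i →
      ∑ j, ∏ i, ℓ j i ^ a i = if a = d then κ else 0)
    (b : Fin n → ℕ) (hb : ∑ i, b i ≤ ∑ i : Fin n, d i.succ + d 0)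
    (h0 : (∀ j, ℓ j 0 ≠ 0) ∨ ∑ i, b i < ∑ i : Fin n, d i.succ + d 0) :
    ∑ j, ℓ j 0 ^ (∑ i, d i) * ∏ i : Fin n, (ℓ j i.succ / ℓ j 0) ^ b i
      = if b = (fun i => d i.succ) then κ else 0 := by
  have hs : ∑ i, d i = ∑ i : Fin n, d i.succ + d 0 := by rw [Fin.sum_univ_succ, add_comm]
  let a : Fin (n + 1) → ℕ := Fin.cons (∑ i, d i - ∑ i, b i) b
  have ha : ∑ i, a i = ∑ i, d i := by
    rw [Fin.sum_univ_succ]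
    simp only [a, Fin.cons_zero, Fin.cons_succ]
    omega
  have had : a = d ↔ b = fun i => d i.succ := by
    constructor
    · intro h
      funext i
      rw [← h]
      simp [a]
    · rintro rfl
      funext i
      refine Fin.cases ?_ (fun i => ?_) i
      · simp only [a, Fin.cons_zero]
        omega
      · simp [a]
  have h := hκ a ha
  simp only [had] at h
  rw [← h]
  refine Finset.sum_congr rfl fun j _ => ?_
  rw [Fin.prod_univ_succ]
  simp only [a, Fin.cons_zero, Fin.cons_succ]
  by_cases hj : ℓ j 0 = 0
  · have hlt : ∑ i, b i < ∑ i : Fin n, d i.succ + d 0 := h0.resolve_left fun h => h j hj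
    rw [hj, zero_pow (by omega), zero_pow (by omega)]
    simp
  · have e : ∏ i : Fin n, ℓ j i.succ ^ b i
        = ℓ j 0 ^ (∑ i, b i) * ∏ i : Fin n, (ℓ j i.succ / ℓ j 0) ^ b i := by
      rw [← Finset.prod_pow_eq_pow_sum, ← Finset.prod_mul_distrib]
      exact Finset.prod_congr rfl fun i _ => by rw [← mul_pow, mul_div_cancel₀ _ hj]
    rw [e, ← mul_assoc, ← pow_add, Nat.sub_add_cancel (by omega)]

/-- For a functional `L` that extracts the coefficient at `e` up to a factor `κ`, multiplying
`∑ c b * v ^ b` by the complementary monomial `v ^ (e - s)` and applying `L` gives `κ * c s`. The bound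
`hs` keeps all degrees within the range in which `L` is controlled. -/
theorem sum_mul_complement_eq {n r : ℕ} (e : Fin n → ℕ) (w : Fin r → ℂ) (v : Fin r → Fin n → ℂ) (κ : ℂ) (B : ℕ)
    (hmom : ∀ b : Fin n → ℕ, ∑ i, b i ≤ ∑ i, e i + B →
      ∑ j, w j * ∏ i, v j i ^ b i = if b = e then κ else 0)
    (c : ((i : Fin n) → Fin (e i + 1)) → ℂ) (s : (i : Fin n) → Fin (e i + 1))
    (hs : ∀ b, c b ≠ 0 → ∑ i, (b i : ℕ) ≤ ∑ i, (s i : ℕ) + B) :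
    ∑ j, w j * (∏ i, v j i ^ (e i - s i)) * ∑ b, c b * ∏ i, v j i ^ (b i : ℕ) = κ * c s := by
  have hle : ∀ i, (s i : ℕ) ≤ e i := fun i => by have := (s i).2; omega
  have hsub : ∑ i, (e i - s i) = ∑ i, e i - ∑ i, (s i : ℕ) :=
    Finset.sum_tsub_distrib _ fun i _ => hle i
  have hle' : ∑ i, (s i : ℕ) ≤ ∑ i, e i := Finset.sum_le_sum fun i _ => hle i
  simp only [Finset.mul_sum]
  rw [Finset.sum_comm]
  have key : ∀ b : (i : Fin n) → Fin (e i + 1),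
      ∑ j, w j * (∏ i, v j i ^ (e i - s i)) * (c b * ∏ i, v j i ^ (b i : ℕ))
        = if b = s then κ * c s else 0 := by
    intro b
    by_cases hc : c b = 0
    · have : (if b = s then κ * c s else 0) = 0 := by
        split_ifs with h
        · rw [← h, hc, mul_zero]
        · rfl
      simp [this, hc]
    · have h1 := hmom (fun i => e i - s i + b i) (by
        rw [Finset.sum_add_distrib, hsub]
        have := hs b hc
        omega)
      have h2 : ((fun i => e i - s i + (b i : ℕ)) = e) ↔ b = s := by
        constructor
        · intro h
          funext i
          have h3 := congrFun h i
          have := hle i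
          exact Fin.ext (by omega)
        · rintro rfl
          funext i
          have := hle i
          omega
      simp only [h2] at h1
      calc _ = c b * ∑ j, w j * ∏ i, v j i ^ (e i - s i + (b i : ℕ)) := by
            rw [Finset.mul_sum]
            refine Finset.sum_congr rfl fun j _ => ?_
            simp only [pow_add, Finset.prod_mul_distrib]
            ring
        _ = _ := by
            rw [h1]
            split_ifs with h
            · rw [h, mul_comm]
            · simp
  simp [key]

/-- The monomials with exponents in the box `b ≤ e` are linearly independent as weighted functions
on the points: a relation is tested against the complement of an exponent of maximal degree in it. -/
theorem linearIndependent_monomials {n r : ℕ} (e : Fin n → ℕ) (w : Fin r → ℂ) (v : Fin r → Fin n → ℂ) (κ : ℂ)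
    (hκ : κ ≠ 0) (hmom : ∀ b : Fin n → ℕ, ∑ i, b i ≤ ∑ i, e i →
      ∑ j, w j * ∏ i, v j i ^ b i = if b = e then κ else 0) :
    LinearIndependent ℂ fun (b : (i : Fin n) → Fin (e i + 1)) (j : Fin r) =>
      w j * ∏ i, v j i ^ (b i : ℕ) := by
  classical
  rw [Fintype.linearIndependent_iff]
  intro c hc
  by_contra! hne
  obtain ⟨b₀, hb₀⟩ := hne
  obtain ⟨s, hs, hmax⟩ := Finset.exists_max_image (Finset.univ.filter fun b => c b ≠ 0)
    (fun b => ∑ i, (b i : ℕ)) ⟨b₀, by simpa using hb₀⟩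
  simp only [Finset.mem_filter, Finset.mem_univ, true_and] at hs hmax
  have h := sum_mul_complement_eq e w v κ 0 (by simpa using hmom) c s (by simpa using hmax)
  have h0 : ∀ j, w j * ∑ b, c b * ∏ i, v j i ^ (b i : ℕ) = 0 := by
    intro j
    have := congrFun hc j
    simp only [Finset.sum_apply, Pi.smul_apply, smul_eq_mul, Pi.zero_apply] at this
    rw [← this, Finset.mul_sum]
    exact Finset.sum_congr rfl fun b _ => by ring
  refine mul_ne_zero hκ hs (h.symm.trans ?_)
  refine Finset.sum_eq_zero fun j _ => ?_
  rw [mul_right_comm, h0, zero_mul]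

/-! ### Division by the generators -/

/-- One rewriting step: replacing a factor `Y` of a monomial by `(∑ c b * x ^ m b * y ^ f b) * x ^ D`
changes the monomial by a multiple of the difference of the two. -/
theorem rewrite_identity {R ι : Type*} [CommRing R] {n : ℕ} [Fintype ι] (x Y : R) (y : Fin n → R)
    (k D : ℕ) (a : Fin n → ℕ) (c : ι → R) (m : ι → ℕ) (f : ι → Fin n → ℕ) :
    x ^ k * ((∏ i, y i ^ a i) * Y)
      - ∑ b, c b * (x ^ (k + m b + D) * ∏ i, y i ^ (a i + f b i))
    = (x ^ k * ∏ i, y i ^ a i) * (Y - (∑ b, c b * (x ^ m b * ∏ i, y i ^ f b i)) * x ^ D) := by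
  rw [mul_sub, mul_assoc, Finset.sum_mul, Finset.mul_sum]
  congr 1
  refine Finset.sum_congr rfl fun b _ => ?_
  simp only [pow_add, Finset.prod_mul_distrib]
  ring

/-- Division with remainder: modulo the generators, every polynomial is a combination of the
monomials in `X 1, …, X n` with exponents in the box `b ≤ e`, with coefficients in `ℂ[X 0]`. It
terminates since each rewriting step lowers the degree in `X 1, …, X n`. -/
theorem normal_form {n : ℕ} (e : Fin n → ℕ) (d0 : ℕ)
    (K : Ideal (MvPolynomial (Fin (n + 1)) ℂ)) (c : Fin n → ((i : Fin n) → Fin (e i + 1)) → ℂ)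
    (hc : ∀ i b, c i b ≠ 0 → ∑ k, (b k : ℕ) + d0 ≤ e i)
    (hK : ∀ i, X i.succ ^ (e i + 1) - (∑ b, C (c i b) * (X 0 ^ (e i - d0 - ∑ k, (b k : ℕ))
      * ∏ k, X k.succ ^ (b k : ℕ))) * X 0 ^ (d0 + 1) ∈ K)
    (p : MvPolynomial (Fin (n + 1)) ℂ) :
    ∃ q : ((i : Fin n) → Fin (e i + 1)) → Polynomial ℂ,
      p - ∑ b, Polynomial.aeval (X 0 : MvPolynomial (Fin (n + 1)) ℂ) (q b)
        * ∏ k, X k.succ ^ (b k : ℕ) ∈ K := by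
  classical
  let T := (i : Fin n) → Fin (e i + 1)
  let P : MvPolynomial (Fin (n + 1)) ℂ → Prop := fun p => ∃ q : T → Polynomial ℂ,
      p - ∑ b, Polynomial.aeval (X 0 : MvPolynomial (Fin (n + 1)) ℂ) (q b)
        * ∏ k, X k.succ ^ (b k : ℕ) ∈ K
  have hadd : ∀ p p', P p → P p' → P (p + p') := by
    rintro p p' ⟨q, hq⟩ ⟨q', hq'⟩
    refine ⟨q + q', ?_⟩
    convert K.add_mem hq hq' using 1
    simp only [Pi.add_apply, map_add, add_mul, Finset.sum_add_distrib]
    ring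
  have hC : ∀ (a : ℂ) p, P p → P (C a * p) := by
    rintro a p ⟨q, hq⟩
    refine ⟨fun b => Polynomial.C a * q b, ?_⟩
    convert K.mul_mem_left (C a) hq using 1
    simp only [map_mul, Polynomial.aeval_C, mul_sub, Finset.mul_sum, mul_assoc, algebraMap_eq]
  have h0 : P 0 := ⟨0, by simp⟩
  have hsum : ∀ f : T → MvPolynomial (Fin (n + 1)) ℂ, (∀ b, P (f b)) → P (∑ b, f b) := fun f hf =>
    Finset.sum_induction f P hadd h0 fun b _ => hf b
  have hmem : ∀ p p', p - p' ∈ K → P p' → P p := by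
    rintro p p' h ⟨q, hq⟩
    exact ⟨q, by simpa using K.add_mem h hq⟩
  have hmon : ∀ N k (a : Fin n → ℕ), ∑ i, a i = N → P (X 0 ^ k * ∏ i, X i.succ ^ a i) := by
    intro N
    induction N using Nat.strong_induction_on with
    | _ N ih =>
      intro k a ha
      by_cases hT : ∀ i, a i < e i + 1
      · let s : T := fun i => ⟨a i, hT i⟩
        refine ⟨Pi.single s (Polynomial.X ^ k), ?_⟩
        rw [Finset.sum_eq_single s]
        · simp [s]
        · intro b _ hb
          simp [Pi.single_eq_of_ne hb]
        · simp
      · push Not at hT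
        obtain ⟨i, hi⟩ := hT
        let a' : Fin n → ℕ := Function.update a i (a i - (e i + 1))
        have ha' : ∑ k, a' k + (e i + 1) = N := by
          rw [← ha, ← Finset.add_sum_erase _ _ (Finset.mem_univ i),
            ← Finset.add_sum_erase _ a (Finset.mem_univ i)]
          have : ∑ k ∈ Finset.univ.erase i, a' k = ∑ k ∈ Finset.univ.erase i, a k :=
            Finset.sum_congr rfl fun k hk => by simp [a', Finset.ne_of_mem_erase hk]
          rw [this]
          simp only [a', Function.update_self]
          omega
        have hprod : (∏ k, X k.succ ^ a k : MvPolynomial (Fin (n + 1)) ℂ)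
            = (∏ k, X k.succ ^ a' k) * X i.succ ^ (e i + 1) := by
          rw [← Finset.mul_prod_erase _ _ (Finset.mem_univ i),
            ← Finset.mul_prod_erase _ (fun k : Fin n => (X k.succ ^ a' k :
              MvPolynomial (Fin (n + 1)) ℂ)) (Finset.mem_univ i)]
          have : (∏ k ∈ Finset.univ.erase i, X k.succ ^ a' k : MvPolynomial (Fin (n + 1)) ℂ)
              = ∏ k ∈ Finset.univ.erase i, X k.succ ^ a k :=
            Finset.prod_congr rfl fun k hk => by simp [a', Finset.ne_of_mem_erase hk]
          rw [this]
          simp only [a', Function.update_self]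
          rw [mul_right_comm, ← pow_add, Nat.sub_add_cancel hi]
        refine hmem _ (∑ b : T, C (c i b) * (X 0 ^ (k + (e i - d0 - ∑ k, (b k : ℕ)) + (d0 + 1))
          * ∏ k, X k.succ ^ (a' k + b k))) ?_ ?_
        · rw [hprod, rewrite_identity]
          exact K.mul_mem_left _ (hK i)
        · refine hsum _ fun b => ?_
          by_cases hcb : c i b = 0
          · rw [hcb, C_0, zero_mul]
            exact h0
          · refine hC _ _ (ih _ ?_ _ _ rfl)
            have := hc i b hcb
            rw [Finset.sum_add_distrib]
            omega
  change P p
  induction p using MvPolynomial.induction_on' with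
  | monomial u a =>
    rw [monomial_eq, Finsupp.prod_fintype _ _ (by simp), Fin.prod_univ_succ]
    exact hC _ _ (hmon _ _ _ rfl)
  | add p q hp hq => exact hadd _ _ hp hq

/-! ### The vanishing ideal -/

/-- Every Waring decomposition of a monomial `x_0^{d_0} ⋯ x_n^{d_n}` (with
`0 < d_0 ≤ ⋯ ≤ d_n`) is a complete intersection: the homogeneous vanishing ideal `I`
of the points `[ℓ_1],…,[ℓ_r] ∈ ℙ^n` is generated by
`α_1^{d_1+1} − φ_1 α_0^{d_0+1}, …, α_n^{d_n+1} − φ_n α_0^{d_0+1}`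
for some homogeneous `φ_i` of degree `d_i − d_0`. -/
theorem decomposition_is_complete_intersection (n : ℕ) (hn : 1 ≤ n)
    (d : Fin (n + 1) → ℕ) (hmono : Monotone d) (hpos : 0 < d 0)
    (r : ℕ) (ℓ : Fin r → (Fin (n + 1) → ℂ))
    (hdec : (∏ i, X i ^ d i : MvPolynomial (Fin (n + 1)) ℂ)
        = ∑ j, (∑ i, C (ℓ j i) * X i) ^ (∑ i, d i))
    (hmin : IsLeast {s : ℕ | ∃ m : Fin s → (Fin (n + 1) → ℂ),
        (∏ i, X i ^ d i : MvPolynomial (Fin (n + 1)) ℂ)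
          = ∑ j, (∑ i, C (m j i) * X i) ^ (∑ i, d i)} r)
    (I : Ideal (MvPolynomial (Fin (n + 1)) ℂ))
    (hI : ∀ p : MvPolynomial (Fin (n + 1)) ℂ,
      p ∈ I ↔ ∀ (j : Fin r) (c : ℂ), c ≠ 0 → eval (fun i => c * ℓ j i) p = 0) :
    ∃ φ : Fin n → MvPolynomial (Fin (n + 1)) ℂ,
      (∀ i : Fin n, (φ i).IsHomogeneous (d i.succ - d 0)) ∧
      I = Ideal.span (Set.range fun i : Fin n =>
        X i.succ ^ (d i.succ + 1) - φ i * X 0 ^ (d 0 + 1)) := by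
  classical
  obtain ⟨κ, hκ0, hκ⟩ := sum_prod_pow_eq d ℓ hdec
  let e : Fin n → ℕ := fun i => d i.succ
  have hde : ∀ i, d 0 ≤ e i := fun i => hmono (Fin.zero_le _)
  let T := (i : Fin n) → Fin (e i + 1)
  let w : Fin r → ℂ := fun j => ℓ j 0 ^ (∑ i, d i)
  let v : Fin r → Fin n → ℂ := fun j i => ℓ j i.succ / ℓ j 0
  have hind : LinearIndependent ℂ fun (b : T) (j : Fin r) => w j * ∏ i, v j i ^ (b i : ℕ) := by
    refine linearIndependent_monomials e w v κ hκ0 fun b hb => ?_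
    exact sum_weight_mul_prod_pow_eq d ℓ κ hκ b (hb.trans (Nat.le_add_right _ _))
      (Or.inr (by change _ ≤ ∑ i : Fin n, d i.succ at hb; omega))
  have hle : r ≤ Fintype.card T := hmin.2 (exists_decomposition d hmono hpos)
  have hge : Fintype.card T ≤ r := by simpa using hind.fintype_card_le_finrank
  have htop := hind.span_eq_top_of_card_eq_finrank' (by simpa using le_antisymm hge hle)
  -- The weighted box monomials span all functions on the points, so no weight can vanish.
  have hw : ∀ j, w j ≠ 0 := by
    intro j hj
    have : (Pi.single j 1 : Fin r → ℂ) ∈ Submodule.span ℂ (Set.range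
        fun (b : T) (j : Fin r) => w j * ∏ i, v j i ^ (b i : ℕ)) := htop ▸ Submodule.mem_top
    obtain ⟨c, hc⟩ := (Submodule.mem_span_range_iff_exists_fun ℂ).1 this
    have := congrFun hc j
    simp [hj] at this
  have hd : 0 < ∑ i, d i := by rw [Fin.sum_univ_succ]; omega
  have hℓ : ∀ j, ℓ j 0 ≠ 0 := fun j hj => hw j (by simp [w, hj, hd.ne'])
  have hzero : ∀ c : T → ℂ, (∀ j, ∑ b, c b * ∏ i, v j i ^ (b i : ℕ) = 0) → c = 0 := by
    intro c hc
    funext b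
    refine Fintype.linearIndependent_iff.1 hind c ?_ b
    funext j
    simp only [Finset.sum_apply, Pi.smul_apply, smul_eq_mul, Pi.zero_apply]
    rw [← mul_zero (w j), ← hc j, Finset.mul_sum]
    exact Finset.sum_congr rfl fun b _ => by ring
  have hinterp : ∀ i, ∃ c : T → ℂ, ∀ j, ∑ b, c b * ∏ k, v j k ^ (b k : ℕ) = v j i ^ (e i + 1) := by
    intro i
    have : (fun j => w j * v j i ^ (e i + 1)) ∈ Submodule.span ℂ (Set.range
        fun (b : T) (j : Fin r) => w j * ∏ i, v j i ^ (b i : ℕ)) := htop ▸ Submodule.mem_top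
    obtain ⟨c, hc⟩ := (Submodule.mem_span_range_iff_exists_fun ℂ).1 this
    refine ⟨c, fun j => mul_left_cancel₀ (hw j) ?_⟩
    have := congrFun hc j
    simp only [Finset.sum_apply, Pi.smul_apply, smul_eq_mul] at this
    rw [← this, Finset.mul_sum]
    exact Finset.sum_congr rfl fun b _ => by ring
  choose c hc using hinterp
  have hmom : ∀ b : Fin n → ℕ, ∑ i, b i ≤ ∑ i, e i + d 0 →
      ∑ j, w j * ∏ i, v j i ^ b i = if b = e then κ else 0 := fun b hb =>
    sum_weight_mul_prod_pow_eq d ℓ κ hκ b hb (Or.inl hℓ)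
  -- The degree bound that makes the correction to `X i ^ (d i + 1)` divisible by `X 0 ^ (d 0 + 1)`.
  have hdeg : ∀ i (b : T), c i b ≠ 0 → ∑ k, (b k : ℕ) + d 0 ≤ e i := by
    intro i b₀ hb₀
    obtain ⟨s, hs, hmax⟩ := Finset.exists_max_image (Finset.univ.filter fun b => c i b ≠ 0)
      (fun b => ∑ i, (b i : ℕ)) ⟨b₀, by simpa using hb₀⟩
    simp only [Finset.mem_filter, Finset.mem_univ, true_and] at hs hmax
    have hle₀ := hmax b₀ hb₀
    by_contra hcon
    have h := sum_mul_complement_eq e w v κ (d 0) hmom (c i) s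
      (fun b hb => (hmax b hb).trans (Nat.le_add_right _ _))
    refine mul_ne_zero hκ0 hs (h.symm.trans ?_)
    have hles : ∀ k, (s k : ℕ) ≤ e k := fun k => by have := (s k).2; omega
    have hsub : ∑ k, (e k - s k) = ∑ k, e k - ∑ k, (s k : ℕ) :=
      Finset.sum_tsub_distrib _ fun k _ => hles k
    have hle' : ∑ k, (s k : ℕ) ≤ ∑ k, e k := Finset.sum_le_sum fun k _ => hles k
    have h1 := hmom (fun k => e k - s k + if k = i then e i + 1 else 0) (by
      rw [Finset.sum_add_distrib, hsub]
      simp only [Finset.sum_ite_eq', Finset.mem_univ, if_true]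
      omega)
    -- The exponent at `i` is at least `e i + 1`, so this moment vanishes.
    rw [if_neg (fun h => by have := congrFun h i; simp only [if_true] at this; omega)] at h1
    rw [← h1]
    refine Finset.sum_congr rfl fun j _ => ?_
    rw [hc]
    simp only [pow_add _ (e _ - _), Finset.prod_mul_distrib, pow_ite, pow_zero, Finset.prod_ite_eq',
      Finset.mem_univ, if_true, mul_assoc]
  let φ : Fin n → MvPolynomial (Fin (n + 1)) ℂ := fun i =>
    ∑ b : T, C (c i b) * (X 0 ^ (e i - d 0 - ∑ k, (b k : ℕ)) * ∏ k, X k.succ ^ (b k : ℕ))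
  have heval : ∀ (j : Fin r) (t : ℂ) (k : Fin n), t * ℓ j k.succ = t * ℓ j 0 * v j k :=
    fun j t k => by simp only [v]; rw [mul_assoc, mul_div_cancel₀ _ (hℓ j)]
  have hKI : Ideal.span (Set.range fun i : Fin n =>
      (X i.succ ^ (d i.succ + 1) - φ i * X 0 ^ (d 0 + 1) : MvPolynomial (Fin (n + 1)) ℂ)) ≤ I := by
    rw [Ideal.span_le]
    rintro _ ⟨i, rfl⟩
    refine (hI _).2 fun j t _ => ?_
    have hφ : eval (fun i => t * ℓ j i) (φ i) * (t * ℓ j 0) ^ (d 0 + 1)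
        = (t * ℓ j 0) ^ (e i + 1) * ∑ b, c i b * ∏ k, v j k ^ (b k : ℕ) := by
      simp only [φ, map_sum]
      rw [Finset.sum_mul, Finset.mul_sum]
      refine Finset.sum_congr rfl fun b _ => ?_
      by_cases hcb : c i b = 0
      · simp [hcb]
      · have h1 := hdeg i b hcb
        have h2 : e i + 1 = (e i - d 0 - ∑ k, (b k : ℕ)) + ∑ k, (b k : ℕ) + (d 0 + 1) := by omega
        rw [h2, pow_add _ _ (d 0 + 1), pow_add]
        simp only [map_mul, map_prod, map_pow, eval_X, eval_C, heval, mul_pow _ (v _ _),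
          Finset.prod_mul_distrib, Finset.prod_pow_eq_pow_sum]
        ring
    simp only [map_sub, map_mul, map_pow, eval_X]
    rw [hφ, hc, heval, mul_pow]
    exact sub_self _
  refine ⟨φ, fun i => ?_, le_antisymm ?_ ?_⟩
  · refine IsHomogeneous.sum _ _ _ fun b _ => ?_
    by_cases hcb : c i b = 0
    · simpa [hcb] using isHomogeneous_zero _ _ _
    · have h1 := hdeg i b hcb
      have h2 := ((isHomogeneous_X_pow (R := ℂ) (0 : Fin (n + 1))
        (e i - d 0 - ∑ k, (b k : ℕ))).mul (IsHomogeneous.prod Finset.univ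
          (fun k : Fin n => (X k.succ ^ (b k : ℕ) : MvPolynomial (Fin (n + 1)) ℂ)) _
          fun k _ => isHomogeneous_X_pow _ _)).C_mul (c i b)
      convert h2 using 1
      change e i - d 0 = _
      omega
  · intro p hp
    set K := Ideal.span (Set.range fun i : Fin n =>
        (X i.succ ^ (d i.succ + 1) - φ i * X 0 ^ (d 0 + 1) : MvPolynomial (Fin (n + 1)) ℂ))
    obtain ⟨q, hq⟩ := normal_form e (d 0) K c hdeg
      (fun i => Ideal.subset_span ⟨i, rfl⟩) p
    have hz := (hI _).1 (sub_sub_cancel p _ ▸ I.sub_mem hp (hKI hq))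
    -- `x / ℓ j 0` rescales the `j`-th point to have first coordinate `x`; with `x` fixed, the remainder
    -- becomes a relation between box monomials at the points.
    have hq0 : q = 0 := by
      funext b
      refine Polynomial.eq_zero_of_infinite_isRoot _
        ((Set.finite_singleton (0 : ℂ)).infinite_compl.mono fun x hx => ?_)
      have hx0 : x ≠ 0 := hx
      have h := hzero (fun b => (q b).eval x * x ^ ∑ k, (b k : ℕ)) (fun j => by
        have h1 := hz j (x / ℓ j 0) (div_ne_zero hx0 (hℓ j))
        rw [map_sum] at h1
        rw [← h1]
        refine Finset.sum_congr rfl fun b _ => ?_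
        have h2 : eval (fun i => x / ℓ j 0 * ℓ j i) (Polynomial.aeval (X 0) (q b))
            = (q b).eval x := by
          rw [← coe_aeval_eq_eval, RingHom.coe_coe, ← Polynomial.aeval_algHom_apply]
          simp [div_mul_cancel₀ _ (hℓ j)]
        simp only [map_mul, map_prod, map_pow, eval_X, h2, heval, div_mul_cancel₀ _ (hℓ j), mul_pow,
          Finset.prod_mul_distrib, Finset.prod_pow_eq_pow_sum]
        ring)
      have := congrFun h b
      simpa [hx0] using this
    subst hq0
    simpa using hq
  · exact hKI
end

section
/- Let F = x_0^{d_0} x_1^{d_1} ⋯ x_n^{d_n} ∈ ℂ[x_0,…,x_n] with 0 < d_0 ≤ d_1 ≤ ⋯ ≤ d_n and d = d_0 + ⋯ + d_n. If F = ℓ_1^d + ⋯ + ℓ_r^d with r = R(F) = (d_1+1)⋯(d_n+1), then for every i the linear form ℓ_i has a nonzero coefficient of x_0. -/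
/-!
Comparing coefficients in `F = ∑ j, ℓ_j ^ D`, `D = d_0 + ⋯ + d_n`, gives the moments of the
coefficient vectors: for every exponent `m` of total degree `D`, the sum `∑ j, ℓ_j ^ m` is zero
exactly when `m ≠ d` (`sum_moment_ne_zero`, `sum_moment_eq_zero`).

Dehomogenize the forms with `ℓ_j 0 ≠ 0` to points `p_j = ℓ_j / ℓ_j 0` of affine space. The
`∏_{i ≥ 1} (d_i + 1) = r` monomials `z ^ a` with `a ≤ (d_1, …, d_n)` are linearly independent as
functions on these points: in a vanishing combination, take a term `a⋆` of maximal degree,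
multiply by `ℓ_j 0 ^ D * p_j ^ (d - a⋆)` and sum over `j`. Each term becomes a moment whose
exponent has positive `x_0`-part (by maximality and `0 < d_0`), and the only nonzero one is the
one for `a⋆`. Hence there are at least `r` such points, that is, every `ℓ_j 0` is nonzero.
-/

open MvPolynomial

lemma coeff_linearForm_pow {σ : Type*} [Fintype σ] [DecidableEq σ] (c : σ → ℂ) (N : ℕ)
    (m : σ → ℕ) (hm : ∑ i, m i = N) :
    coeff (Finsupp.equivFunOnFinite.symm m) ((∑ i, C (c i) * X i : MvPolynomial σ ℂ) ^ N)
      = Nat.multinomial Finset.univ m * ∏ i, c i ^ m i := by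
  have key : ∀ k : σ → ℕ, ((Nat.multinomial Finset.univ k : ℕ) : MvPolynomial σ ℂ)
        * ∏ i, (C (c i) * X i : MvPolynomial σ ℂ) ^ k i
      = monomial (Finsupp.equivFunOnFinite.symm k)
          ((Nat.multinomial Finset.univ k : ℂ) * ∏ i, c i ^ k i) := by
    intro k
    rw [monomial_eq, Finsupp.prod_fintype _ _ (by simp)]
    simp [mul_pow, Finset.prod_mul_distrib, mul_assoc]
  rw [Finset.sum_pow_eq_sum_piAntidiag, coeff_sum, Finset.sum_eq_single m]
  · rw [key, coeff_monomial, if_pos rfl]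
  · intro k _ hk
    rw [key, coeff_monomial, if_neg]
    simpa using hk
  · intro h
    exact absurd (by simp [hm]) h

lemma sum_moment {σ : Type*} [Fintype σ] [DecidableEq σ] (d : σ → ℕ) (r : ℕ)
    (ℓ : Fin r → σ → ℂ)
    (hdec : (∏ i, X i ^ d i : MvPolynomial σ ℂ)
        = ∑ j, (∑ i, C (ℓ j i) * X i) ^ (∑ i, d i))
    (m : σ → ℕ) (hm : ∑ i, m i = ∑ i, d i) :
    (Nat.multinomial Finset.univ m : ℂ) * ∑ j, ∏ i, ℓ j i ^ m i = if m = d then 1 else 0 := by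
  have h := congrArg (coeff (Finsupp.equivFunOnFinite.symm m)) hdec
  have hF : (∏ i, X i ^ d i : MvPolynomial σ ℂ)
      = monomial (Finsupp.equivFunOnFinite.symm d) 1 := by
    rw [monomial_eq, Finsupp.prod_fintype _ _ (by simp)]
    simp
  rw [hF, coeff_monomial, coeff_sum] at h
  simp only [coeff_linearForm_pow _ _ m hm, EmbeddingLike.apply_eq_iff_eq, eq_comm (a := d)] at h
  rw [Finset.mul_sum, ← h]

lemma sum_moment_ne_zero {σ : Type*} [Fintype σ] [DecidableEq σ] (d : σ → ℕ) (r : ℕ)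
    (ℓ : Fin r → σ → ℂ)
    (hdec : (∏ i, X i ^ d i : MvPolynomial σ ℂ)
        = ∑ j, (∑ i, C (ℓ j i) * X i) ^ (∑ i, d i)) :
    ∑ j, ∏ i, ℓ j i ^ d i ≠ 0 := by
  intro h
  simpa [h] using sum_moment d r ℓ hdec d rfl

lemma sum_moment_eq_zero {σ : Type*} [Fintype σ] [DecidableEq σ] (d : σ → ℕ) (r : ℕ)
    (ℓ : Fin r → σ → ℂ)
    (hdec : (∏ i, X i ^ d i : MvPolynomial σ ℂ)
        = ∑ j, (∑ i, C (ℓ j i) * X i) ^ (∑ i, d i))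
    (m : σ → ℕ) (hm : ∑ i, m i = ∑ i, d i) (hne : m ≠ d) :
    ∑ j, ∏ i, ℓ j i ^ m i = 0 := by
  have h := sum_moment d r ℓ hdec m hm
  rw [if_neg hne] at h
  exact (mul_eq_zero.mp h).resolve_left
    (Nat.cast_ne_zero.mpr (Nat.multinomial_pos Finset.univ m).ne')

/-- The value at `ℓ / ℓ 0` of the affine monomial with exponent `a`, weighted by `ℓ 0`. The weight
makes it vanish for a form without `x_0`-coefficient, where the point `ℓ / ℓ 0` is meaningless. -/
noncomputable def weightedEval {n : ℕ} (ℓ : Fin (n + 1) → ℂ) (a : Fin n → ℕ) : ℂ :=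
  ℓ 0 * ∏ i, (ℓ i.succ / ℓ 0) ^ a i

/-- Homogenization: up to a factor not depending on `a`, the weighted values are values of
monomials of degree `D` with positive `x_0`-exponent. -/
lemma mul_weightedEval {n : ℕ} (ℓ : Fin (n + 1) → ℂ) (a b : Fin n → ℕ) (D : ℕ)
    (h : ∑ i, (b i + a i) < D) :
    (ℓ 0 ^ (D - 1) * ∏ i, (ℓ i.succ / ℓ 0) ^ b i) * weightedEval ℓ a
      = ∏ i, ℓ i ^ (Fin.cons (D - ∑ i, (b i + a i)) (fun i => b i + a i) : Fin (n + 1) → ℕ) i := by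
  rw [Fin.prod_univ_succ]
  simp only [Fin.cons_zero, Fin.cons_succ, weightedEval]
  by_cases h0 : ℓ 0 = 0
  · have : D - ∑ i, (b i + a i) ≠ 0 := by omega
    simp [h0, this]
  · have e1 : ℓ 0 ^ D = ℓ 0 ^ (D - ∑ i, (b i + a i)) * ∏ i, ℓ 0 ^ (b i + a i) := by
      rw [Finset.prod_pow_eq_pow_sum, ← pow_add]
      congr 1
      omega
    have e2 : ℓ 0 ^ (D - 1) * ℓ 0 = ℓ 0 ^ D := by
      rw [← pow_succ]
      congr 1
      omega
    calc _ = (ℓ 0 ^ (D - 1) * ℓ 0) *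
          ((∏ i, (ℓ i.succ / ℓ 0) ^ b i) * ∏ i, (ℓ i.succ / ℓ 0) ^ a i) := by ring
      _ = ℓ 0 ^ (D - ∑ i, (b i + a i)) *
          ∏ i, (ℓ 0 ^ (b i + a i) * (ℓ i.succ / ℓ 0) ^ (b i + a i)) := by
        rw [e2, e1]
        simp only [Finset.prod_mul_distrib, pow_add, mul_assoc]
      _ = _ := by
        congr 1
        refine Finset.prod_congr rfl fun i _ => ?_
        rw [← mul_pow, mul_div_cancel₀ _ h0]

/-- The monomials with exponents `a ≤ (d_1, …, d_n)` are linearly independent as functions on the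
points of a Waring decomposition lying off the hyperplane `x_0 = 0`. -/
lemma linearIndependent_weightedEval {n : ℕ} (d : Fin (n + 1) → ℕ) (hpos : 0 < d 0) (r : ℕ)
    (ℓ : Fin r → (Fin (n + 1) → ℂ))
    (hdec : (∏ i, X i ^ d i : MvPolynomial (Fin (n + 1)) ℂ)
        = ∑ j, (∑ i, C (ℓ j i) * X i) ^ (∑ i, d i)) :
    LinearIndependent ℂ (fun (a : ∀ i : Fin n, Fin (d i.succ + 1)) (j : Fin r) =>
      weightedEval (ℓ j) (fun i => (a i : ℕ))) := by
  rw [Fintype.linearIndependent_iff]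
  intro g hg
  by_contra! hne
  -- a term of maximal degree in the vanishing combination
  obtain ⟨s, hs, hmax⟩ := Finset.exists_max_image (Finset.univ.filter fun a => g a ≠ 0)
    (fun a => ∑ i, (a i : ℕ)) (by simpa [Finset.Nonempty] using hne)
  simp only [Finset.mem_filter, Finset.mem_univ, true_and] at hs hmax
  set D := ∑ i, d i with hD
  let b : Fin n → ℕ := fun i => d i.succ - s i
  have hbs : ∀ i, b i + s i = d i.succ := fun i => by
    have := (s i).isLt
    simp only [b]
    omega
  have hDs : D = d 0 + ∑ i : Fin n, d i.succ := by rw [hD, Fin.sum_univ_succ]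
  have hbsum : ∑ i, b i + ∑ i, (s i : ℕ) = ∑ i : Fin n, d i.succ := by
    rw [← Finset.sum_add_distrib]
    exact Finset.sum_congr rfl fun i _ => hbs i
  let w : Fin r → ℂ := fun j => ℓ j 0 ^ (D - 1) * ∏ i, (ℓ j i.succ / ℓ j 0) ^ b i
  have hlt : ∀ a, g a ≠ 0 → ∑ i, (b i + (a i : ℕ)) < D := fun a ha => by
    have := hmax a ha
    rw [Finset.sum_add_distrib]
    omega
  have hzero : ∑ a, g a * ∑ j, w j * weightedEval (ℓ j) (fun i => (a i : ℕ)) = 0 := by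
    simp only [Finset.mul_sum]
    rw [Finset.sum_comm]
    refine Finset.sum_eq_zero fun j _ => ?_
    have hj := congrFun hg j
    simp only [Finset.sum_apply, Pi.smul_apply, smul_eq_mul, Pi.zero_apply] at hj
    rw [← mul_zero (w j), ← hj, Finset.mul_sum]
    exact Finset.sum_congr rfl fun a _ => by ring
  rw [Finset.sum_eq_single s] at hzero
  · refine (mul_ne_zero hs ?_) hzero
    have hcons : (Fin.cons (D - ∑ i, (b i + (s i : ℕ))) (fun i => b i + (s i : ℕ)) :
        Fin (n + 1) → ℕ) = d := by
      funext i
      refine Fin.cases ?_ (fun i => ?_) i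
      · simp only [Fin.cons_zero, hbs]
        omega
      · simp only [Fin.cons_succ, hbs]
    simp only [w, mul_weightedEval _ _ b D (hlt s hs), hcons]
    exact sum_moment_ne_zero d r ℓ hdec
  · intro a _ has
    by_cases ha : g a = 0
    · rw [ha, zero_mul]
    · simp only [w, mul_weightedEval _ _ b D (hlt a ha)]
      rw [sum_moment_eq_zero d r ℓ hdec, mul_zero]
      · have := hlt a ha
        rw [Fin.sum_univ_succ]
        simp only [Fin.cons_zero, Fin.cons_succ]
        omega
      · intro h
        refine has (funext fun i => Fin.ext ?_)
        have h1 := congrFun h i.succ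
        have h2 := hbs i
        simp only [Fin.cons_succ] at h1
        omega
  · simp

/-- In any Waring decomposition `x_0^{d_0} ⋯ x_n^{d_n} = ℓ_1^d + ⋯ + ℓ_r^d` of a monomial
with `0 < d_0 ≤ ⋯ ≤ d_n` and `r = R(F) = (d_1+1)⋯(d_n+1)`, every linear form `ℓ_j`
has a nonzero coefficient of `x_0`. -/
theorem nonzero_x0_coefficient (n : ℕ) (hn : 1 ≤ n)
    (d : Fin (n + 1) → ℕ) (hmono : Monotone d) (hpos : 0 < d 0)
    (r : ℕ) (hr : r = ∏ i ∈ Finset.univ.erase 0, (d i + 1))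
    (ℓ : Fin r → (Fin (n + 1) → ℂ))
    (hdec : (∏ i, X i ^ d i : MvPolynomial (Fin (n + 1)) ℂ)
        = ∑ j, (∑ i, C (ℓ j i) * X i) ^ (∑ i, d i))
    (hmin : IsLeast {s : ℕ | ∃ m : Fin s → (Fin (n + 1) → ℂ),
        (∏ i, X i ^ d i : MvPolynomial (Fin (n + 1)) ℂ)
          = ∑ j, (∑ i, C (m j i) * X i) ^ (∑ i, d i)} r) :
    ∀ j : Fin r, ℓ j 0 ≠ 0 := by
  intro j hj
  have hcard : Fintype.card (∀ i : Fin n, Fin (d i.succ + 1)) = Module.finrank ℂ (Fin r → ℂ) := by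
    have h0 : (Finset.univ.erase (0 : Fin (n + 1))) = Finset.univ.map (Fin.succEmb n) := by
      ext i
      refine Fin.cases ?_ (fun i => ?_) i <;> simp [Fin.succ_ne_zero]
    rw [Module.finrank_fin_fun, hr, h0, Finset.prod_map]
    simp
  -- `r` independent vectors span `ℂ^r`, but all of them vanish in coordinate `j`
  have htop := (linearIndependent_weightedEval d hpos r ℓ hdec).span_eq_top_of_card_eq_finrank'
    hcard
  have hle : (⊤ : Submodule ℂ (Fin r → ℂ)) ≤ LinearMap.ker (LinearMap.proj j) := by
    rw [← htop, Submodule.span_le]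
    rintro _ ⟨a, rfl⟩
    simp [weightedEval, hj]
  have h1 : (fun _ => 1 : Fin r → ℂ) ∈ LinearMap.ker (LinearMap.proj (R := ℂ) j) :=
    hle Submodule.mem_top
  simp at h1
end
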